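/- Let f ∈ ℤ[X] have degree n ≥ 1 and let g ∈ ℚ[X] be a nonzero divisor of f in ℚ[X], say f = g·h with h ∈ ℚ[X]. Then the polynomial h·g′ (g′ the derivative of g) has all coefficients in ℤ, has degree at most n−1, and satisfies ‖h·g′‖₂ ≤ 2^{n−1} · n · ‖f‖₂, where ‖·‖₂ denotes the Euclidean norm (square root of the sum of the squares of the coefficients). -/

import Mathlib

open Polynomial Finset

/-- The Euclidean (`L²`) norm of the coefficient vector of a rational polynomial. -/
noncomputable def polyNorm2 (f : Polynomial ℚ) : ℝ :=
  Real.sqrt (∑ i ∈ range (f.natDegree + 1), ((f.coeff i : ℝ)) ^ 2)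

/-!
Over a field in which `g` splits, `Φ(g) = h·g′ = ∑ f / (X - α)`, the sum running over the roots `α`
of `g` with multiplicity. Each summand `f / (X - α)` has integral coefficients, because dividing out
a linear factor preserves integrality: a leading coefficient times a root is integral, so the
quotient can be peeled off one leading term at a time. Over `ℂ`, dividing out a linear factor does
not increase the Mahler measure, so the `k`-th coefficient of each summand is at most
`(n - 1).choose k * M(f)`, and Landau's inequality gives `M(f) ≤ ‖f‖₂`. Summing over the at most `n`
roots and over `k` gives the bound.
-/

section Integrality

variable {R S : Type*} [CommRing R] [CommRing S] [Algebra R S]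

theorem isIntegral_leadingCoeff_mul_of_isRoot {p : S[X]} {a : S}
    (hp : ∀ i, IsIntegral R (p.coeff i)) (ha : p.IsRoot a) :
    IsIntegral R (p.leadingCoeff * a) := by
  obtain ⟨P, hP, hdeg⟩ := exists_natDegree_eq_of_mem_lifts <|
    (lifts_iff_coeff_lifts (f := algebraMap (integralClosure R S) S) p).mpr
      fun i ↦ ⟨⟨p.coeff i, hp i⟩, rfl⟩
  have hroot : aeval a P = 0 := by rw [← eval_map_algebraMap, hP, ha.eq_zero]
  have hlead : P.leadingCoeff • a = p.leadingCoeff * a := by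
    rw [Algebra.smul_def, leadingCoeff, hdeg, ← coeff_map, hP, coeff_natDegree]
  exact hlead ▸ isIntegral_trans _ (isIntegral_leadingCoeff_smul P a hroot)

theorem isIntegral_coeff_C_mul_X_pow {c : S} (hc : IsIntegral R c) (n i : ℕ) :
    IsIntegral R ((C c * X ^ n).coeff i) := by
  rw [coeff_C_mul_X_pow]
  split_ifs
  exacts [hc, isIntegral_zero]

theorem isIntegral_coeff_of_X_sub_C_mul {a : S} {q : S[X]}
    (hq : ∀ i, IsIntegral R (((X - C a) * q).coeff i)) (i : ℕ) : IsIntegral R (q.coeff i) := by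
  nontriviality S
  induction hN : #q.support generalizing q i with
  | zero => simp [card_support_eq_zero.mp hN, isIntegral_zero]
  | succ N ih =>
    have hlead : ((X - C a) * q).leadingCoeff = q.leadingCoeff :=
      leadingCoeff_monic_mul (monic_X_sub_C a)
    have hc : IsIntegral R q.leadingCoeff := hlead ▸ hq _
    have hca : IsIntegral R (q.leadingCoeff * a) :=
      hlead ▸ isIntegral_leadingCoeff_mul_of_isRoot hq
        (root_mul_right_of_isRoot q (root_X_sub_C.mpr rfl))
    have hsplit : (X - C a) * q.eraseLead = (X - C a) * q -
        (C q.leadingCoeff * X ^ (q.natDegree + 1) -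
          C (q.leadingCoeff * a) * X ^ q.natDegree) := by
      rw [← self_sub_C_mul_X_pow, C_mul]
      ring
    have herase (j : ℕ) : IsIntegral R (q.eraseLead.coeff j) := by
      refine ih (fun k ↦ ?_) j (card_support_eraseLead' hN)
      rw [hsplit, coeff_sub, coeff_sub]
      exact (hq k).sub <|
        (isIntegral_coeff_C_mul_X_pow hc _ k).sub (isIntegral_coeff_C_mul_X_pow hca _ k)
    rw [← q.eraseLead_add_C_mul_X_pow, coeff_add]
    exact (herase i).add (isIntegral_coeff_C_mul_X_pow hc _ i)

end Integrality

section SplittingFactor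

variable {R : Type*} [CommRing R] [IsDomain R] {g : R[X]}

theorem mul_derivative_eq_sum_divByMonic (hg : g.Splits) (h : R[X]) :
    h * derivative g = (g.roots.map fun a ↦ (g * h) /ₘ (X - C a)).sum := by
  classical
  have hquot (a : R) (ha : a ∈ g.roots) : (g * h) /ₘ (X - C a) =
      h * C g.leadingCoeff * ((g.roots.erase a).map (X - C ·)).prod := by
    have hfactor : g * h = (X - C a) *
        (h * C g.leadingCoeff * ((g.roots.erase a).map (X - C ·)).prod) := by
      conv_lhs => rw [hg.eq_prod_roots, ← Multiset.cons_erase ha]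
      rw [Multiset.map_cons, Multiset.prod_cons]
      ring
    rw [hfactor, mul_divByMonic_cancel_left _ (monic_X_sub_C a)]
  rw [Multiset.map_congr rfl hquot, Multiset.sum_map_mul_left]
  conv_lhs => rw [hg.eq_prod_roots]
  simp only [derivative_C_mul, derivative_prod, derivative_X_sub_C, mul_one, mul_assoc]

theorem coeff_mul_derivative_eq_sum (hg : g.Splits) (h : R[X]) (k : ℕ) :
    (h * derivative g).coeff k =
      (g.roots.map fun a ↦ ((g * h) /ₘ (X - C a)).coeff k).sum := by
  rw [mul_derivative_eq_sum_divByMonic hg, ← lcoeff_apply, map_multiset_sum, Multiset.map_map]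
  rfl

end SplittingFactor

theorem exists_map_eq_mul_derivative {R K : Type*} [CommRing R] [Field K] [Algebra R K]
    [IsIntegrallyClosedIn R K] {f : R[X]} {g h : K[X]} (hf : f.map (algebraMap R K) = g * h) :
    ∃ F : R[X], F.map (algebraMap R K) = h * derivative g := by
  let L := AlgebraicClosure K
  let φ := algebraMap K L
  have hfL (i : ℕ) : IsIntegral R ((g.map φ * h.map φ).coeff i) := by
    rw [← Polynomial.map_mul, ← hf, coeff_map, coeff_map]
    exact isIntegral_algebraMap.algebraMap
  have hquot (a : L) (ha : a ∈ (g.map φ).roots) (i : ℕ) :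
      IsIntegral R (((g.map φ * h.map φ) /ₘ (X - C a)).coeff i) := by
    have hroot : (g.map φ * h.map φ).IsRoot a :=
      root_mul_right_of_isRoot _ (isRoot_of_mem_roots ha)
    refine isIntegral_coeff_of_X_sub_C_mul (a := a) (fun j ↦ ?_) i
    rw [mul_divByMonic_eq_iff_isRoot.mpr hroot]
    exact hfL j
  rw [← mem_lifts, lifts_iff_coeff_lifts]
  refine fun i ↦ IsIntegrallyClosedIn.isIntegral_iff.mp ?_
  rw [← isIntegral_algebraMap_iff (B := L) φ.injective, ← coeff_map, Polynomial.map_mul,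
    ← derivative_map, coeff_mul_derivative_eq_sum (IsAlgClosed.splits _)]
  exact .multiset_sum <| Multiset.forall_mem_map_iff.mpr fun a ha ↦ hquot a ha i

theorem natDegree_mul_derivative_le {R : Type*} [Semiring R] [NoZeroDivisors R] (g h : R[X]) :
    (h * derivative g).natDegree ≤ (g * h).natDegree - 1 := by
  rcases eq_or_ne h 0 with rfl | hh
  · simp
  rcases eq_or_ne g.natDegree 0 with hg | hg
  · simp [derivative_of_natDegree_zero hg]
  have hgh : (g * h).natDegree = g.natDegree + h.natDegree :=
    natDegree_mul (ne_zero_of_natDegree_gt hg.bot_lt) hh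
  have hle := natDegree_mul_le (p := h) (q := derivative g)
  have hlt := natDegree_derivative_lt hg
  lia

theorem mahlerMeasure_le_mahlerMeasure_X_sub_C_mul (a : ℂ) (p : ℂ[X]) :
    p.mahlerMeasure ≤ ((X - C a) * p).mahlerMeasure := by
  rw [mahlerMeasure_mul, mahlerMeasure_X_sub_C]
  exact le_mul_of_one_le_left p.mahlerMeasure_nonneg (le_max_left _ _)

theorem norm_coeff_divByMonic_X_sub_C_le {p : ℂ[X]} {a : ℂ} (ha : p.IsRoot a) (k : ℕ) :
    ‖(p /ₘ (X - C a)).coeff k‖ ≤ (p.natDegree - 1).choose k * p.mahlerMeasure := by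
  have hdeg : (p /ₘ (X - C a)).natDegree = p.natDegree - 1 := by
    rw [natDegree_divByMonic p (monic_X_sub_C a), natDegree_X_sub_C]
  have hmahler : (p /ₘ (X - C a)).mahlerMeasure ≤ p.mahlerMeasure := by
    conv_rhs => rw [← mul_divByMonic_eq_iff_isRoot.mpr ha]
    exact mahlerMeasure_le_mahlerMeasure_X_sub_C_mul a _
  refine (norm_coeff_le_choose_mul_mahlerMeasure k _).trans ?_
  rw [hdeg]
  gcongr

theorem norm_coeff_mul_derivative_le (g h : ℂ[X]) (k : ℕ) :
    ‖(h * derivative g).coeff k‖ ≤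
      g.natDegree * (((g * h).natDegree - 1).choose k * (g * h).mahlerMeasure) := by
  set B : ℝ := ((g * h).natDegree - 1).choose k * (g * h).mahlerMeasure
  have hB : ∀ a ∈ g.roots, ‖((g * h) /ₘ (X - C a)).coeff k‖ ≤ B := fun a ha ↦
    norm_coeff_divByMonic_X_sub_C_le (root_mul_right_of_isRoot h (isRoot_of_mem_roots ha)) k
  rw [coeff_mul_derivative_eq_sum (IsAlgClosed.splits g)]
  calc ‖(g.roots.map fun a ↦ ((g * h) /ₘ (X - C a)).coeff k).sum‖
      ≤ (g.roots.map fun a ↦ ‖((g * h) /ₘ (X - C a)).coeff k‖).sum := by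
        simpa only [Multiset.map_map, Function.comp_def] using norm_multiset_sum_le
          (g.roots.map fun a ↦ ((g * h) /ₘ (X - C a)).coeff k)
    _ ≤ (g.roots.map fun _ ↦ B).sum := Multiset.sum_map_le_sum_map _ _ hB
    _ = g.natDegree * B := by
        rw [Multiset.map_const', Multiset.sum_replicate, nsmul_eq_mul,
          splits_iff_card_roots.mp (IsAlgClosed.splits g)]

theorem polyNorm2_le_sum_abs_coeff (p : ℚ[X]) :
    polyNorm2 p ≤ ∑ k ∈ range (p.natDegree + 1), |(p.coeff k : ℝ)| := by
  refine Real.sqrt_le_iff.mpr ⟨sum_nonneg fun _ _ ↦ abs_nonneg _, ?_⟩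
  simpa only [sq_abs] using sum_sq_le_sq_sum_of_nonneg (s := range (p.natDegree + 1))
    (f := fun k ↦ |(p.coeff k : ℝ)|) fun _ _ ↦ abs_nonneg _

theorem polyNorm2_le_two_pow_mul_of_abs_coeff_le {p : ℚ[X]} {m : ℕ} {B : ℝ}
    (hp : ∀ k, |(p.coeff k : ℝ)| ≤ m.choose k * B) : polyNorm2 p ≤ 2 ^ m * B := by
  have hdeg : p.natDegree ≤ m := natDegree_le_iff_coeff_eq_zero.mpr fun k hk ↦ by
    simpa [Nat.choose_eq_zero_of_lt hk] using hp k
  calc polyNorm2 p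
      ≤ ∑ k ∈ range (p.natDegree + 1), |(p.coeff k : ℝ)| := polyNorm2_le_sum_abs_coeff p
    _ ≤ ∑ k ∈ range (m + 1), |(p.coeff k : ℝ)| :=
        sum_le_sum_of_subset_of_nonneg (range_subset_range.mpr (by lia))
          fun _ _ _ ↦ abs_nonneg _
    _ ≤ ∑ k ∈ range (m + 1), m.choose k * B := sum_le_sum fun k _ ↦ hp k
    _ = 2 ^ m * B := by
        rw [← sum_mul, ← Nat.cast_sum, Nat.sum_range_choose, Nat.cast_pow, Nat.cast_ofNat]

theorem mahlerMeasure_map_le_polyNorm2 (p : ℚ[X]) :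
    (p.map (algebraMap ℚ ℂ)).mahlerMeasure ≤ polyNorm2 p := by
  refine (mahlerMeasure_le_sqrt_sum_sq_norm_coeff _).trans (Real.sqrt_le_sqrt ?_)
  have hnorm (i : ℕ) : ‖(p.map (algebraMap ℚ ℂ)).coeff i‖ ^ 2 = (p.coeff i : ℝ) ^ 2 := by
    simp [coeff_map]
  simp only [hnorm]
  exact sum_le_sum_of_subset_of_nonneg
    ((support_map_subset _ _).trans supp_subset_range_natDegree_succ) fun _ _ _ ↦ sq_nonneg _

theorem polyNorm2_mul_derivative_le (g h : ℚ[X]) :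
    polyNorm2 (h * derivative g) ≤
      2 ^ ((g * h).natDegree - 1) * (g.natDegree * polyNorm2 (g * h)) := by
  let φ := algebraMap ℚ ℂ
  refine polyNorm2_le_two_pow_mul_of_abs_coeff_le fun k ↦ ?_
  calc |((h * derivative g).coeff k : ℝ)|
      = ‖(h.map φ * derivative (g.map φ)).coeff k‖ := by
        rw [derivative_map, ← Polynomial.map_mul, coeff_map]
        simp [φ]
    _ ≤ (g.map φ).natDegree * (((g.map φ * h.map φ).natDegree - 1).choose k *
          (g.map φ * h.map φ).mahlerMeasure) := norm_coeff_mul_derivative_le _ _ k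
    _ = ((g * h).natDegree - 1).choose k *
          (g.natDegree * ((g * h).map φ).mahlerMeasure) := by
        rw [← Polynomial.map_mul, natDegree_map, natDegree_map, mul_left_comm]
    _ ≤ ((g * h).natDegree - 1).choose k * (g.natDegree * polyNorm2 (g * h)) := by
        gcongr
        exact mahlerMeasure_map_le_polyNorm2 _

/-- **Corollary 4.**
Let `f ∈ ℤ[X]` have degree `n ≥ 1` and `g` a nonzero divisor of `f` in `ℚ[X]` with
cofactor `h` (so `f = g·h` in `ℚ[X]`).  Then `Φ(g) = h·g′` has integer coefficients,
degree at most `n - 1`, and `‖h·g′‖₂ ≤ 2^(n-1) · n · ‖f‖₂`. -/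
theorem stmt4 (f : Polynomial ℤ) (g h : Polynomial ℚ) (n : ℕ)
    (hn : n = f.natDegree) (hn1 : 1 ≤ n) (hg : g ≠ 0)
    (hfactor : f.map (Int.castRingHom ℚ) = g * h) :
    (∃ F : Polynomial ℤ, F.map (Int.castRingHom ℚ) = h * derivative g) ∧
    (h * derivative g).natDegree ≤ n - 1 ∧
    polyNorm2 (h * derivative g) ≤
      2 ^ (n - 1) * (n : ℝ) * polyNorm2 (f.map (Int.castRingHom ℚ)) := by
  have hf : f ≠ 0 := ne_zero_of_natDegree_gt (hn ▸ hn1)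
  have hgh : g * h ≠ 0 :=
    hfactor ▸ (Polynomial.map_ne_zero_iff (RingHom.injective_int _)).mpr hf
  have hdeg : n = (g * h).natDegree := by
    rw [← hfactor, hn, natDegree_map_eq_of_injective (RingHom.injective_int _)]
  have hgn : g.natDegree ≤ n := hdeg ▸ natDegree_le_of_dvd (dvd_mul_right g h) hgh
  refine ⟨exists_map_eq_mul_derivative hfactor, hdeg ▸ natDegree_mul_derivative_le g h, ?_⟩
  calc polyNorm2 (h * derivative g)
      ≤ 2 ^ (n - 1) * (g.natDegree * polyNorm2 (g * h)) :=
        hdeg ▸ polyNorm2_mul_derivative_le g h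
    _ ≤ 2 ^ (n - 1) * (n * polyNorm2 (g * h)) := by
        gcongr
        exact Real.sqrt_nonneg _
    _ = 2 ^ (n - 1) * n * polyNorm2 (f.map (Int.castRingHom ℚ)) := by rw [hfactor, mul_assoc]
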